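/- arXiv:2312.10360 — 7 statements merged into one kernel-verified Lean document; each statement's English description precedes it below -/
import Mathlib

section
/- Consider a storage system of n nodes and k objects in which object o_i is stored on a nonempty set C_i of nodes, and fix a threshold m ∈ (0,1]. A nonnegative demand vector (ρ_1,…,ρ_k) is m-servable if and only if for every subset I ⊆ {1,…,k} it holds that Σ_{i∈I} ρ_i ≤ m · |⋃_{i∈I} C_i|. -/
open MeasureTheory Finset

/-- A demand vector `ρ` is `m`-servable for the storage allocation `C` (object `i` is
stored on the set of nodes `C i`) if the demands can be split across service choices
so that every node carries load at most `m`. -/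
def Servable {n k : ℕ} (C : Fin k → Finset (Fin n)) (m : ℝ) (ρ : Fin k → ℝ) : Prop :=
  ∃ x : Fin k → Fin n → ℝ,
    (∀ i u, 0 ≤ x i u) ∧
    (∀ i u, u ∉ C i → x i u = 0) ∧
    (∀ i, ∑ u ∈ C i, x i u = ρ i) ∧
    (∀ u : Fin n, ∑ i ∈ univ.filter (fun i => u ∈ C i), x i u ≤ m)

/-!
Necessity is double counting. For sufficiency, let the nodes have individual capacities `c u` and
induct on the number of pairs `u ∈ C i`. To remove such a pair, send an amount `t` of the demand
of `i` to `u` and lower `d i` and `c u` by `t`. The span condition survives if `t` is at least the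
excess `d(I) - c(C(I))` of every set `I` and at most the slack `c(C(J)) - d(J)` of every set `J`
that avoids `i` and still reaches `u`. The largest excess is such a `t`: as `I ∪ J` and `I ∩ J`
satisfy the original span condition, `d` is modular and `I ↦ c(C(I))` is submodular, no excess
exceeds such a slack. No division is needed, so the argument works over every linearly ordered
abelian group.
-/

section BiUnion

variable {ι κ : Type*} [DecidableEq ι] [DecidableEq κ]

lemma biUnion_update_insert_of_mem {C : ι → Finset κ} {i : ι} {u : κ} {I : Finset ι}
    (hi : i ∈ I) :
    I.biUnion (Function.update C i (insert u (C i))) = insert u (I.biUnion C) := by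
  ext v
  simp only [mem_biUnion, mem_insert, Function.update_apply]
  grind

lemma biUnion_update_of_notMem {C : ι → Finset κ} {i : ι} {s : Finset κ} {I : Finset ι}
    (hi : i ∉ I) : I.biUnion (Function.update C i s) = I.biUnion C :=
  biUnion_congr rfl fun _ hj => Function.update_of_ne (ne_of_mem_of_not_mem hj hi) _ _

end BiUnion

lemma sub_single_nonneg {ι K : Type*} [DecidableEq ι] [AddCommGroup K] [PartialOrder K]
    [IsOrderedAddMonoid K] {f : ι → K} {i : ι} {t : K} (hf : 0 ≤ f) (ht : t ≤ f i) :
    0 ≤ f - Pi.single i t :=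
  sub_nonneg.2 (update_le_iff.2 ⟨ht, fun j _ => hf j⟩)

section Transportation

variable {ι κ K : Type*} [AddCommMonoid K] [PartialOrder K] {C : ι → Finset κ}
  {c : κ → K} {d : ι → K} {i : ι} {u : κ}

/-- `x` solves the transportation problem with demands `d`, node capacities `c` and service
choices `C`, where `x i u` is the part of the demand of `i` served by `u`. As `x` vanishes off the
service choices, the load of a node is summed over all objects. -/
structure IsAllocation [Fintype ι] (C : ι → Finset κ) (c : κ → K) (d : ι → K)
    (x : ι → κ → K) : Prop where
  nonneg : ∀ i u, 0 ≤ x i u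
  eq_zero_of_notMem : ∀ i u, u ∉ C i → x i u = 0
  sum_eq_demand : ∀ i, ∑ u ∈ C i, x i u = d i
  sum_le_capacity : ∀ u, ∑ i, x i u ≤ c u

lemma isAllocation_zero [Fintype ι] (hc : 0 ≤ c) : IsAllocation (fun _ => ∅) c (0 : ι → K) 0 where
  nonneg _ _ := le_rfl
  eq_zero_of_notMem _ _ _ := rfl
  sum_eq_demand _ := sum_empty
  sum_le_capacity u := by simpa using hc u

variable [DecidableEq κ]

/-- The capacitated form of Hall's condition: no set of objects demands more than the total
capacity of the nodes that can serve it. -/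
def SpanCondition (C : ι → Finset κ) (c : κ → K) (d : ι → K) : Prop :=
  ∀ I : Finset ι, ∑ i ∈ I, d i ≤ ∑ u ∈ I.biUnion C, c u

lemma SpanCondition.eq_zero_of_empty (h : SpanCondition (fun _ => ∅) c d)
    (hd : 0 ≤ d) : d = 0 :=
  le_antisymm (fun i => by simpa using h {i}) hd

lemma SpanCondition.sum_le_sum_biUnion [DecidableEq ι]
    (h : SpanCondition (Function.update C i (insert u (C i))) c d)
    {I : Finset ι} (hI : i ∈ I → u ∈ I.biUnion C) :
    ∑ j ∈ I, d j ≤ ∑ v ∈ I.biUnion C, c v := by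
  by_cases hi : i ∈ I
  · simpa only [biUnion_update_insert_of_mem hi, insert_eq_of_mem (hI hi)] using h I
  · simpa only [biUnion_update_of_notMem hi] using h I

variable [IsOrderedAddMonoid K]

lemma IsAllocation.spanCondition [Fintype ι] {x : ι → κ → K} (hx : IsAllocation C c d x) :
    SpanCondition C c d := fun I =>
  calc ∑ i ∈ I, d i = ∑ i ∈ I, ∑ u ∈ I.biUnion C, x i u :=
        sum_congr rfl fun i hi => by
          rw [← hx.sum_eq_demand i]
          exact sum_subset (subset_biUnion_of_mem C hi) fun u _ => hx.eq_zero_of_notMem i u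
    _ = ∑ u ∈ I.biUnion C, ∑ i ∈ I, x i u := sum_comm
    _ ≤ ∑ u ∈ I.biUnion C, c u := sum_le_sum fun u _ =>
        (sum_le_univ_sum_of_nonneg fun i => hx.nonneg i u).trans (hx.sum_le_capacity u)

variable [DecidableEq ι]

lemma SpanCondition.sum_le_capacity_add (hc : 0 ≤ c)
    (h : SpanCondition (Function.update C i (insert u (C i))) c d) (I : Finset ι) :
    ∑ j ∈ I, d j ≤ c u + ∑ v ∈ I.biUnion C, c v := by
  by_cases hI : i ∈ I ∧ u ∉ I.biUnion C
  · simpa only [biUnion_update_insert_of_mem hI.1, sum_insert hI.2] using h I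
  · exact (h.sum_le_sum_biUnion fun hi => by tauto).trans (le_add_of_nonneg_left (hc u))

lemma SpanCondition.sum_le_demand_add (hc : 0 ≤ c) (hd : 0 ≤ d)
    (h : SpanCondition (Function.update C i (insert u (C i))) c d) (I : Finset ι) :
    ∑ j ∈ I, d j ≤ d i + ∑ v ∈ I.biUnion C, c v := by
  by_cases hi : i ∈ I
  · calc ∑ j ∈ I, d j = d i + ∑ j ∈ I.erase i, d j := (add_sum_erase I d hi).symm
      _ ≤ d i + ∑ v ∈ (I.erase i).biUnion C, c v := by
          gcongr
          exact h.sum_le_sum_biUnion fun hi => absurd hi (notMem_erase i I)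
      _ ≤ d i + ∑ v ∈ I.biUnion C, c v := by
          gcongr
          · exact fun v _ _ => hc v
          · exact erase_subset i I
  · exact (h.sum_le_sum_biUnion fun hiI => absurd hiI hi).trans (le_add_of_nonneg_left (hd i))

lemma SpanCondition.sum_add_sum_le (hc : 0 ≤ c)
    (h : SpanCondition (Function.update C i (insert u (C i))) c d)
    {I J : Finset ι} (hiJ : i ∉ J) (huJ : u ∈ J.biUnion C) :
    ∑ j ∈ I, d j + ∑ j ∈ J, d j ≤ ∑ v ∈ I.biUnion C, c v + ∑ v ∈ J.biUnion C, c v := by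
  have hunion : ∑ j ∈ I ∪ J, d j ≤ ∑ v ∈ I.biUnion C ∪ J.biUnion C, c v := by
    rw [← union_biUnion]
    exact h.sum_le_sum_biUnion fun _ =>
      biUnion_subset_biUnion_of_subset_left C subset_union_right huJ
  have hinter : ∑ j ∈ I ∩ J, d j ≤ ∑ v ∈ I.biUnion C ∩ J.biUnion C, c v := by
    have hspan : ∑ j ∈ I ∩ J, d j ≤ ∑ v ∈ (I ∩ J).biUnion C, c v :=
      h.sum_le_sum_biUnion fun hi => absurd (mem_of_mem_inter_right hi) hiJ
    refine hspan.trans (sum_le_sum_of_subset_of_nonneg ?_ fun v _ _ => hc v)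
    exact subset_inter (biUnion_subset_biUnion_of_subset_left C inter_subset_left)
      (biUnion_subset_biUnion_of_subset_left C inter_subset_right)
  calc ∑ j ∈ I, d j + ∑ j ∈ J, d j
      = ∑ j ∈ I ∪ J, d j + ∑ j ∈ I ∩ J, d j := sum_union_inter.symm
    _ ≤ ∑ v ∈ I.biUnion C ∪ J.biUnion C, c v + ∑ v ∈ I.biUnion C ∩ J.biUnion C, c v :=
        add_le_add hunion hinter
    _ = ∑ v ∈ I.biUnion C, c v + ∑ v ∈ J.biUnion C, c v := sum_union_inter

end Transportation

section Transfer

variable {ι κ K : Type*} [DecidableEq ι] [DecidableEq κ] [AddCommGroup K] {C : ι → Finset κ}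
  {c : κ → K} {d : ι → K} {i : ι} {u : κ}

lemma IsAllocation.add_single [PartialOrder K] [IsOrderedAddMonoid K]
    [Fintype ι] {x : ι → κ → K} {t : K} (ht : 0 ≤ t) (hu : u ∉ C i)
    (hx : IsAllocation C (c - Pi.single u t) (d - Pi.single i t) x) :
    IsAllocation (Function.update C i (insert u (C i))) c d
      (x + Pi.single i (Pi.single u t)) where
  nonneg := add_nonneg (a := x) hx.nonneg (Pi.single_nonneg.2 (Pi.single_nonneg.2 ht))
  eq_zero_of_notMem j v hv := by
    obtain rfl | hj := eq_or_ne j i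
    · obtain ⟨hvu, hvC⟩ : v ≠ u ∧ v ∉ C j := by simpa using hv
      simp [hx.eq_zero_of_notMem j v hvC, hvu]
    · rw [Function.update_of_ne hj] at hv
      simp [hx.eq_zero_of_notMem j v hv, hj]
  sum_eq_demand j := by
    obtain rfl | hj := eq_or_ne j i
    · have hrow : ∑ v ∈ C j, x j v = d j - t := by simpa using hx.sum_eq_demand j
      simp [sum_insert hu, sum_add_distrib, hx.eq_zero_of_notMem j u hu, hu, hrow]
    · simpa [hj] using hx.sum_eq_demand j
  sum_le_capacity v := by
    have hload : ∑ j, (x + Pi.single i (Pi.single u t) : ι → κ → K) j v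
        = ∑ j, x j v + (Pi.single u t : κ → K) v := by
      simp only [Pi.add_apply, sum_add_distrib]
      rw [← sum_apply v univ (Pi.single i _), Fintype.sum_pi_single']
    rw [hload]
    exact le_sub_iff_add_le.1 (hx.sum_le_capacity v)

lemma SpanCondition.sub_single [PartialOrder K] [IsOrderedAddMonoid K]
    (h : SpanCondition (Function.update C i (insert u (C i))) c d) {t : K}
    (hlower : ∀ I : Finset ι, ∑ j ∈ I, d j - ∑ v ∈ I.biUnion C, c v ≤ t)
    (hupper : ∀ J : Finset ι, i ∉ J → u ∈ J.biUnion C →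
      t ≤ ∑ v ∈ J.biUnion C, c v - ∑ j ∈ J, d j) :
    SpanCondition C (c - Pi.single u t) (d - Pi.single i t) := by
  intro I
  simp only [Pi.sub_apply, sum_sub_distrib, sum_pi_single']
  by_cases hi : i ∈ I <;> by_cases hu : u ∈ I.biUnion C
  · simpa only [hi, hu, if_true] using sub_le_sub_right (h.sum_le_sum_biUnion fun _ => hu) t
  · simpa only [hi, hu, if_true, if_false, sub_zero] using sub_le_comm.1 (hlower I)
  · simpa only [hi, hu, if_true, if_false, sub_zero] using le_sub_comm.1 (hupper I hi hu)
  · simpa only [hi, hu, if_false, sub_zero] using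
      h.sum_le_sum_biUnion fun hiI => absurd hiI hi

lemma SpanCondition.exists_sub_single [LinearOrder K] [IsOrderedAddMonoid K] [Finite ι]
    (hc : 0 ≤ c) (hd : 0 ≤ d) (h : SpanCondition (Function.update C i (insert u (C i))) c d) :
    ∃ t, 0 ≤ t ∧ t ≤ c u ∧ t ≤ d i ∧
      SpanCondition C (c - Pi.single u t) (d - Pi.single i t) := by
  let excess (I : Finset ι) : K := ∑ j ∈ I, d j - ∑ v ∈ I.biUnion C, c v
  obtain ⟨I, hmax⟩ : ∃ I, ∀ J, excess J ≤ excess I := Finite.exists_max excess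
  refine ⟨excess I, ?_, ?_, ?_, h.sub_single hmax fun J hiJ huJ => ?_⟩
  · simpa only [excess, sum_empty, biUnion_empty, sub_zero] using hmax ∅
  · exact sub_le_iff_le_add.2 (h.sum_le_capacity_add hc I)
  · exact sub_le_iff_le_add.2 (h.sum_le_demand_add hc hd I)
  · rw [le_sub_iff_add_le, sub_add_eq_add_sub, sub_le_iff_le_add']
    exact h.sum_add_sum_le hc hiJ huJ

end Transfer

lemma SpanCondition.exists_isAllocation {ι κ K : Type*} [Fintype ι] [DecidableEq κ]
    [AddCommGroup K] [LinearOrder K] [IsOrderedAddMonoid K] {C : ι → Finset κ} {c : κ → K}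
    {d : ι → K} (hc : 0 ≤ c) (hd : 0 ≤ d) (h : SpanCondition C c d) :
    ∃ x, IsAllocation C c d x := by
  classical
  induction C using Finset.induction_on_pi generalizing c d with
  | h0 =>
    obtain rfl := h.eq_zero_of_empty hd
    exact ⟨0, isAllocation_zero hc⟩
  | step C i u hu ih =>
    obtain ⟨t, ht, htc, htd, hspan⟩ := h.exists_sub_single hc hd
    obtain ⟨x, hx⟩ := ih (sub_single_nonneg hc htc) (sub_single_nonneg hd htd) hspan
    exact ⟨_, hx.add_single ht hu⟩

theorem stmt0_general {ι κ K : Type*} [Fintype ι] [DecidableEq κ] [AddCommGroup K]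
    [LinearOrder K] [IsOrderedAddMonoid K] {C : ι → Finset κ} {c : κ → K} {d : ι → K}
    (hc : 0 ≤ c) (hd : 0 ≤ d) :
    (∃ x, IsAllocation C c d x) ↔ SpanCondition C c d :=
  ⟨fun ⟨_, hx⟩ => hx.spanCondition, fun h => h.exists_isAllocation hc hd⟩

lemma servable_iff_exists_isAllocation {n k : ℕ} {C : Fin k → Finset (Fin n)} {m : ℝ}
    {ρ : Fin k → ℝ} : Servable C m ρ ↔ ∃ x, IsAllocation C (fun _ => m) ρ x := by
  refine exists_congr fun _ => ⟨fun ⟨h0, hC, hρ, hm⟩ => ⟨h0, hC, hρ, fun u => ?_⟩,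
    fun ⟨h0, hC, hρ, hm⟩ => ⟨h0, hC, hρ, fun u => ?_⟩⟩
  · rw [← sum_filter_of_ne fun i _ hi => by_contra fun hu => hi (hC i u hu)]
    exact hm u
  · rw [sum_filter_of_ne fun i _ hi => by_contra fun hu => hi (hC i u hu)]
    exact hm u

/-- A nonnegative demand vector is `m`-servable iff for every subset `I` of objects,
the cumulative demand is at most `m` times the span (cardinality of the union of the
service choices) of the objects in `I`. -/
theorem stmt0 {n k : ℕ} (C : Fin k → Finset (Fin n)) (hC : ∀ i, (C i).Nonempty)
    (m : ℝ) (hm0 : 0 < m) (hm1 : m ≤ 1) (ρ : Fin k → ℝ) (hρ : ∀ i, 0 ≤ ρ i) :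
    Servable C m ρ ↔
      ∀ I : Finset (Fin k), ∑ i ∈ I, ρ i ≤ m * ((I.biUnion C).card : ℝ) := by
  rw [servable_iff_exists_isAllocation, stmt0_general (fun _ => hm0.le) hρ]
  simp only [SpanCondition, sum_const, nsmul_eq_mul, mul_comm]
end

section
/- For any d-choice allocation of n objects on n nodes (each object stored on exactly d distinct nodes) and any t ≥ 1, the cumulative t-overlap satisfies CumOverlap_t ≥ n·binomial(d, t); moreover, if the allocation is balanced (each node stores exactly d distinct objects), then CumOverlap_t = n·binomial(d, t), so balanced allocations attain the minimum over all d-choice allocations. -/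
/-!
Counting the pairs `(S, u)` with `u ∈ ⋂_{i ∈ S} C i` node by node gives
`CumOverlap t C = ∑ u, (x u).choose t`, where `x u` is the number of objects stored on node `u`.
The mean of the loads `x u` is `∑ i, #(C i)` divided by the number of nodes, whatever the
allocation, so Jensen's inequality for the convex function `x ↦ x.choose t` shows that the
cumulative overlap is smallest when all loads are equal.
-/

open Finset

/-- For an allocation of `k` objects with service-choice sets `C i` (the set of nodes
storing object `i`), the cumulative `t`-overlap is the sum, over all `t`-element
subsets `S` of objects, of the cardinality of the intersection `⋂_{i ∈ S} C i`. -/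
def CumOverlap {k ν : ℕ} (t : ℕ) (C : Fin k → Finset (Fin ν)) : ℕ :=
  ∑ S ∈ (univ : Finset (Fin k)).powersetCard t, (S.inf C).card

section DoubleCounting

variable {ι α : Type*} [Fintype α] [DecidableEq α] (s : Finset ι) (C : ι → Finset α)

lemma filter_mem_inf_powersetCard (t : ℕ) (u : α) :
    {S ∈ s.powersetCard t | u ∈ S.inf C} = {i ∈ s | u ∈ C i}.powersetCard t := by
  ext S
  simp only [mem_filter, mem_powersetCard, mem_inf, subset_iff]
  grind

lemma sum_card_inf_powersetCard (t : ℕ) :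
    ∑ S ∈ s.powersetCard t, #(S.inf C) = ∑ u, (#{i ∈ s | u ∈ C i}).choose t := calc
  _ = ∑ u, #{S ∈ s.powersetCard t | u ∈ S.inf C} := by
    simpa only [bipartiteAbove, bipartiteBelow, filter_univ_mem] using
      sum_card_bipartiteAbove_eq_sum_card_bipartiteBelow
        (s := s.powersetCard t) (t := univ) fun S u ↦ u ∈ S.inf C
  _ = ∑ u, (#{i ∈ s | u ∈ C i}).choose t := by
    simp only [filter_mem_inf_powersetCard, card_powersetCard]

lemma sum_card_filter_mem : ∑ u, #{i ∈ s | u ∈ C i} = ∑ i ∈ s, #(C i) := by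
  simpa only [bipartiteAbove, bipartiteBelow, filter_univ_mem] using
    (sum_card_bipartiteAbove_eq_sum_card_bipartiteBelow
      (s := s) (t := univ) fun i u ↦ u ∈ C i).symm

end DoubleCounting

lemma card_mul_choose_le_sum_choose {ι : Type*} {s : Finset ι} {x : ι → ℕ} {d : ℕ} (t : ℕ)
    (hx : #s * d ≤ ∑ i ∈ s, x i) : #s * d.choose t ≤ ∑ i ∈ s, (x i).choose t := by
  obtain rfl | hs := s.eq_empty_or_nonempty
  · simp
  obtain rfl | ht := eq_or_ne t 0
  · simp
  -- Below `t - 1` the polynomial `descPochhammer ℝ t` need be neither monotone nor convex.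
  obtain hdt | htd := lt_or_ge d t
  · simp [Nat.choose_eq_zero_of_lt hdt]
  have hs₀ : (0 : ℝ) < #s := by exact_mod_cast hs.card_pos
  have hd : (d : ℝ) ≤ ∑ i ∈ s, (#s : ℝ)⁻¹ * x i := by
    rw [← mul_sum, le_inv_mul_iff₀ hs₀]
    exact_mod_cast hx
  have ht_sub_one : (t - 1 : ℝ) ≤ d :=
    (sub_le_self _ zero_le_one).trans (Nat.cast_le.mpr htd)
  have hmean : (d.choose t : ℝ) ≤ (#s : ℝ)⁻¹ * ∑ i ∈ s, ((x i).choose t : ℝ) := calc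
    (d.choose t : ℝ) = (descPochhammer ℝ t).eval (d : ℝ) / t.factorial :=
      Nat.cast_choose_eq_descPochhammer_div ℝ d t
    _ ≤ (descPochhammer ℝ t).eval (∑ i ∈ s, (#s : ℝ)⁻¹ * x i) / t.factorial := by
      gcongr
      exact monotoneOn_descPochhammer_eval t ht_sub_one (ht_sub_one.trans hd) hd
    _ ≤ ∑ i ∈ s, (#s : ℝ)⁻¹ * (x i).choose t :=
      descPochhammer_eval_div_factorial_le_sum_choose ht x _ (fun _ _ ↦ by positivity)
        (by simp [hs₀.ne']) (ht_sub_one.trans hd)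
    _ = (#s : ℝ)⁻¹ * ∑ i ∈ s, ((x i).choose t : ℝ) := (mul_sum ..).symm
  rw [le_inv_mul_iff₀ hs₀] at hmean
  exact_mod_cast hmean

lemma cumOverlap_eq_sum_choose {k ν : ℕ} (t : ℕ) (C : Fin k → Finset (Fin ν)) :
    CumOverlap t C = ∑ u, (#{i | u ∈ C i}).choose t :=
  sum_card_inf_powersetCard univ C t

theorem stmt4_general {k ν d : ℕ} (t : ℕ) (C : Fin k → Finset (Fin ν))
    (hC : ν * d ≤ ∑ i, #(C i)) :
    ν * d.choose t ≤ CumOverlap t C ∧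
      ((∀ u, #{i | u ∈ C i} = d) → CumOverlap t C = ν * d.choose t) := by
  rw [cumOverlap_eq_sum_choose]
  refine ⟨?_, fun hb ↦ by simp [hb]⟩
  have hload : #(univ : Finset (Fin ν)) * d ≤ ∑ u, #{i | u ∈ C i} := by
    rwa [sum_card_filter_mem, card_fin]
  simpa only [card_fin] using card_mul_choose_le_sum_choose t hload

/-- For any `d`-choice allocation of `n` objects on `n` nodes, the cumulative
`t`-overlap is at least `n * (d.choose t)`; moreover, if the allocation is balanced
(each node stores exactly `d` objects), then equality holds, so balanced allocations
attain the minimum. -/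
theorem stmt4 {n d t : ℕ} (ht : 1 ≤ t) (C : Fin n → Finset (Fin n))
    (hC : ∀ i, (C i).card = d) :
    n * d.choose t ≤ CumOverlap t C ∧
      ((∀ u : Fin n, (univ.filter (fun i => u ∈ C i)).card = d) →
        CumOverlap t C = n * d.choose t) :=
  stmt4_general t C (by simp [hC])
end

section
/- For any storage allocation of n objects on nodes with service-choice sets C_1,…,C_n and i.i.d. demands, the robustness satisfies P ≤ min_{1 ≤ t ≤ n} E[F_t(m · span_T)], where T is a uniformly random t-element subset of {1,…,n} chosen independently of the demands, span_T = |⋃_{i∈T} C_i|, and F_t is the CDF of the sum of t i.i.d. demands. -/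
/-!
If a demand vector is servable, then for every set `S` of objects the whole demand of `S` is carried
by the nodes of `⋃ i ∈ S, C i`, each of which carries at most `m`, so the demand of `S` is at most
`m * span_S`. The demands being i.i.d., the total demand of `t` objects has CDF `F_t` whichever
objects they are. So the robustness is at most `F_t (m * span_S)` for each single `t`-subset `S`,
hence also at most the average of these numbers.
-/

open MeasureTheory Finset
open scoped ENNReal

lemma Servable.sum_le_mul_card_biUnion {n k : ℕ} {C : Fin k → Finset (Fin n)} {m : ℝ}
    {ρ : Fin k → ℝ} (h : Servable C m ρ) (S : Finset (Fin k)) :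
    ∑ i ∈ S, ρ i ≤ m * (#(S.biUnion C) : ℝ) := by
  obtain ⟨x, hx_nonneg, hx_supp, hx_demand, hx_load⟩ := h
  have demand_eq : ∀ i ∈ S, ρ i = ∑ u ∈ S.biUnion C, x i u := fun i hi => by
    rw [← hx_demand i]
    exact sum_subset (subset_biUnion_of_mem C hi) fun u _ hu => hx_supp i u hu
  have load_le (u : Fin n) : ∑ i ∈ S, x i u ≤ m :=
    calc ∑ i ∈ S, x i u ≤ ∑ i, x i u :=
          sum_le_sum_of_subset_of_nonneg (subset_univ S) fun i _ _ => hx_nonneg i u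
      _ = ∑ i with u ∈ C i, x i u :=
          (sum_filter_of_ne fun i _ hne => not_imp_comm.mp (hx_supp i u) hne).symm
      _ ≤ m := hx_load u
  calc ∑ i ∈ S, ρ i = ∑ i ∈ S, ∑ u ∈ S.biUnion C, x i u := sum_congr rfl demand_eq
    _ = ∑ u ∈ S.biUnion C, ∑ i ∈ S, x i u := sum_comm
    _ ≤ ∑ _u ∈ S.biUnion C, m := sum_le_sum fun u _ => load_le u
    _ = m * (#(S.biUnion C) : ℝ) := by rw [sum_const, nsmul_eq_mul, mul_comm]

section ProductMeasure

variable {ι κ : Type*} [Fintype ι] [Fintype κ]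

lemma measurePreserving_pi_comp_injective {X : ι → Type*} [∀ i, MeasurableSpace (X i)]
    (μ : ∀ i, Measure (X i)) [∀ i, IsProbabilityMeasure (μ i)] {e : κ → ι}
    (he : Function.Injective e) :
    MeasurePreserving (fun (x : ∀ i, X i) j => x (e j)) (Measure.pi μ)
      (Measure.pi fun j => μ (e j)) where
  measurable := by fun_prop
  map_eq := by
    simpa only [Measure.infinitePi_eq_pi] using
      Measure.map_infinitePi_infinitePi_of_inj (P := μ) he

lemma identDistrib_finset_sum_pi_const {M : Type*} [AddCommMonoid M] [MeasurableSpace M]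
    [MeasurableAdd₂ M] (μ : Measure M) [IsProbabilityMeasure μ] {S : Finset ι}
    (hS : #S = Fintype.card κ) :
    ProbabilityTheory.IdentDistrib (fun x : ι → M => ∑ i ∈ S, x i) (fun y : κ → M => ∑ j, y j)
      (Measure.pi fun _ => μ) (Measure.pi fun _ => μ) where
  aemeasurable_fst := by fun_prop
  aemeasurable_snd := by fun_prop
  map_eq := by
    obtain ⟨e⟩ : Nonempty (κ ≃ S) := Fintype.card_eq.mp (hS.symm.trans (Fintype.card_coe S).symm)
    have sum_reindex (x : ι → M) : ∑ j, x (e j) = ∑ i ∈ S, x i :=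
      (e.sum_comp fun i => x i).trans (sum_coe_sort S x)
    have coords_preserving := measurePreserving_pi_comp_injective (fun _ : ι => μ)
      (Subtype.val_injective.comp e.injective)
    rw [← coords_preserving.map_eq, Measure.map_map (by fun_prop) coords_preserving.measurable]
    exact congrArg (Measure.map · _) (funext fun x => (sum_reindex x).symm)

end ProductMeasure

lemma le_sum_div_card {ι : Type*} {s : Finset ι} (hs : s.Nonempty) {f : ι → ℝ≥0∞} {a : ℝ≥0∞}
    (h : ∀ i ∈ s, a ≤ f i) : a ≤ (∑ i ∈ s, f i) / (#s : ℝ≥0∞) := by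
  have hcard : (#s : ℝ≥0∞) ≠ 0 := Nat.cast_ne_zero.mpr hs.card_ne_zero
  rw [ENNReal.le_div_iff_mul_le (.inl hcard) (.inl (ENNReal.natCast_ne_top _)), mul_comm,
    ← nsmul_eq_mul]
  exact card_nsmul_le_sum s f a h

lemma pi_servable_le_pi_sum_le {n k t : ℕ} (C : Fin k → Finset (Fin n)) (m : ℝ) (μ : Measure ℝ)
    [IsProbabilityMeasure μ] {S : Finset (Fin k)} (hS : #S = t) :
    (Measure.pi fun _ : Fin k => μ) {ρ | Servable C m ρ} ≤
      (Measure.pi fun _ : Fin t => μ) {v | ∑ i, v i ≤ m * (#(S.biUnion C) : ℝ)} :=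
  calc (Measure.pi fun _ : Fin k => μ) {ρ | Servable C m ρ}
      ≤ (Measure.pi fun _ : Fin k => μ) {ρ | ∑ i ∈ S, ρ i ≤ m * (#(S.biUnion C) : ℝ)} :=
        measure_mono fun _ hρ => hρ.sum_le_mul_card_biUnion S
    _ = (Measure.pi fun _ : Fin t => μ) {v | ∑ i, v i ≤ m * (#(S.biUnion C) : ℝ)} :=
        (identDistrib_finset_sum_pi_const μ (hS.trans (Fintype.card_fin t).symm)).measure_mem_eq
          measurableSet_Iic

theorem stmt5_general {n k : ℕ} (C : Fin k → Finset (Fin n)) (m : ℝ)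
    (μ : Measure ℝ) [IsProbabilityMeasure μ] {t : ℕ} (htk : t ≤ k) :
    (Measure.pi fun _ : Fin k => μ) {ρ | Servable C m ρ} ≤
      (∑ S ∈ (univ : Finset (Fin k)).powersetCard t,
          (Measure.pi fun _ : Fin t => μ)
            {v | ∑ i, v i ≤ m * (#(S.biUnion C) : ℝ)}) /
        (k.choose t : ℝ≥0∞) := by
  have nonempty_subsets : ((univ : Finset (Fin k)).powersetCard t).Nonempty :=
    powersetCard_nonempty.mpr (htk.trans_eq (card_fin k).symm)
  have average_bound := le_sum_div_card nonempty_subsets fun S hS =>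
    pi_servable_le_pi_sum_le C m μ (mem_powersetCard_univ.mp hS)
  rwa [card_powersetCard, card_fin] at average_bound

/-- Upper bound on the robustness of any allocation: for every `1 ≤ t ≤ n`, the robustness
is at most `E[F_t(m ⬝ span_T)]`, where `T` is a uniformly random `t`-element subset of the
objects, `span_T = |⋃_{i ∈ T} C i|`, and `F_t` is the CDF of the sum of `t` i.i.d. demands.
The expectation over `T` is written out as an average over all `t`-subsets. -/
theorem stmt5 (n : ℕ) (hn : 0 < n) (C : Fin n → Finset (Fin n))
    (m : ℝ) (hm0 : 0 < m) (hm1 : m ≤ 1)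
    (μ : Measure ℝ) [IsProbabilityMeasure μ] (hμ : μ (Set.Iio 0) = 0)
    (t : ℕ) (ht : 1 ≤ t) (htn : t ≤ n) :
    (Measure.pi fun _ : Fin n => μ) {ρ | Servable C m ρ} ≤
      (∑ S ∈ (univ : Finset (Fin n)).powersetCard t,
          (Measure.pi fun _ : Fin t => μ)
            {v | ∑ i, v i ≤ m * ((S.biUnion C).card : ℝ)}) /
        (n.choose t : ℝ≥0∞) := by
  exact stmt5_general C m μ htn
end

section
/- Suppose each of the n i.i.d. object demands takes value m·d with probability p and 0 with probability 1−p, and the d-choice allocation is the random design. Then the robustness (the probability, over both the random allocation and the random demands, that the demand vector is m-servable) equals P = E_A[ 1{A·d ≤ n} · ∏_{i=1}^{A−1} binomial(n − i·d, d)/binomial(n, d) ], where A ~ Binomial(n, p) and an empty product equals 1. -/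
/-!
An active object demands `m * d` and is stored on only `d` nodes of capacity `m`, so it saturates
each of its nodes. Hence a demand vector with set of active objects `S` is servable exactly when
the sets `C i`, `i ∈ S`, are pairwise disjoint. Once `i` of these
sets are known to be disjoint, the next one avoids the `i * d` nodes already used with probability
`(n - i * d).choose d / n.choose d`, so the probability that they are disjoint is a product
depending only on the cardinality `a` of `S`, which is binomially distributed. If `a * d > n`, the
last factor of this product vanishes, whence the indicator.
-/

open MeasureTheory Finset
open scoped ENNReal

namespace Servable

variable {n k : ℕ} {C : Fin k → Finset (Fin n)} {m : ℝ} {S : Finset (Fin k)}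

lemma pairwiseDisjoint {ρ : Fin k → ℝ} (h : Servable C m ρ) (hm : 0 < m)
    (hρ : ∀ i ∈ S, ρ i = m * #(C i)) : (S : Set (Fin k)).PairwiseDisjoint C := by
  obtain ⟨x, hx_nonneg, -, hx_sum, hx_load⟩ := h
  have hx_le (i : Fin k) : ∀ u ∈ C i, x i u ≤ m := fun u hu ↦
    (single_le_sum (f := fun j ↦ x j u) (fun j _ ↦ hx_nonneg j u)
      (mem_filter.2 ⟨mem_univ i, hu⟩)).trans (hx_load u)
  have saturated : ∀ i ∈ S, ∀ u ∈ C i, x i u = m := fun i hi ↦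
    (sum_eq_sum_iff_of_le (hx_le i)).1 <| by
      rw [hx_sum, hρ i hi, sum_const, nsmul_eq_mul, mul_comm]
  refine fun i hi j hj hij ↦ disjoint_left.2 fun u hui huj ↦ hm.not_ge ?_
  have two_le : ∑ l ∈ {i, j}, x l u ≤ m :=
    (sum_le_sum_of_subset_of_nonneg (by simp [insert_subset_iff, hui, huj])
      fun l _ _ ↦ hx_nonneg l u).trans (hx_load u)
  rw [sum_pair hij, saturated i hi u hui, saturated j hj u huj] at two_le
  linarith

lemma of_pairwiseDisjoint (hm : 0 ≤ m) (hS : (S : Set (Fin k)).PairwiseDisjoint C) :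
    Servable C m (S.piecewise (fun i ↦ m * #(C i)) fun _ ↦ 0) := by
  refine ⟨fun i u ↦ if i ∈ S ∧ u ∈ C i then m else 0, fun i u ↦ ?_, fun i u hu ↦ ?_, fun i ↦ ?_,
    fun u ↦ ?_⟩
  · positivity
  · exact if_neg fun h ↦ hu h.2
  · by_cases hi : i ∈ S
    · simp [hi, mul_comm]
    · simp [hi]
  · have card_le : #{i | u ∈ C i ∧ i ∈ S ∧ u ∈ C i} ≤ 1 := card_le_one.2 fun i hi j hj ↦ by
      simp only [mem_filter, mem_univ, true_and] at hi hj
      exact hS.elim_finset hi.2.1 hj.2.1 u hi.1 hj.1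
    rw [← sum_filter, filter_filter, sum_const]
    simpa using nsmul_le_nsmul_left hm card_le

end Servable

lemma servable_piecewise_iff {n k : ℕ} {C : Fin k → Finset (Fin n)} {m : ℝ} (hm : 0 < m)
    (S : Finset (Fin k)) :
    Servable C m (S.piecewise (fun i ↦ m * #(C i)) fun _ ↦ 0) ↔
      (S : Set (Fin k)).PairwiseDisjoint C :=
  ⟨fun h ↦ h.pairwiseDisjoint hm fun _ hi ↦ S.piecewise_eq_of_mem _ _ hi,
    .of_pairwiseDisjoint hm.le⟩

section TwoPointLaws

variable {ι : Type*} [Fintype ι] [DecidableEq ι]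

lemma pi_smul_dirac_add_smul_dirac {X : ι → Type*} [∀ i, MeasurableSpace (X i)] (x y : ∀ i, X i)
    (a b : ι → ℝ≥0∞) [∀ i, SigmaFinite (a i • Measure.dirac (x i) + b i • Measure.dirac (y i))] :
    Measure.pi (fun i ↦ a i • Measure.dirac (x i) + b i • Measure.dirac (y i)) =
      ∑ S : Finset ι, ((∏ i ∈ S, a i) * ∏ i ∈ Sᶜ, b i) • Measure.dirac (S.piecewise x y) := by
  refine Measure.pi_eq fun s hs ↦ ?_
  have dirac_box (z : ∀ i, X i) :
      Measure.dirac z (Set.univ.pi s) = ∏ i, Measure.dirac (z i) (s i) := by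
    simpa [Measure.dirac_apply' _ (MeasurableSet.univ_pi hs), Measure.dirac_apply' _ (hs _)]
      using Set.indicator_pi_one_apply univ s z
  have prod_dirac_piecewise (S : Finset ι) :
      ∏ i, Measure.dirac (S.piecewise x y i) (s i) =
        (∏ i ∈ S, Measure.dirac (x i) (s i)) * ∏ i ∈ Sᶜ, Measure.dirac (y i) (s i) := by
    rw [← prod_mul_prod_compl S]
    congr 1 <;> refine prod_congr rfl fun i hi ↦ ?_
    · rw [S.piecewise_eq_of_mem _ _ hi]
    · rw [S.piecewise_eq_of_notMem _ _ (mem_compl.1 hi)]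
  simp only [Measure.finsetSum_apply, Measure.smul_apply, Measure.add_apply, smul_eq_mul,
    Fintype.prod_add, prod_mul_distrib, dirac_box, prod_dirac_piecewise,
    mul_mul_mul_comm]

lemma toReal_pi_two_point {X : Type*} [MeasurableSpace X] [MeasurableSingletonClass X] (x y : X)
    {p : ℝ} (hp0 : 0 ≤ p) (hp1 : p ≤ 1) (T : Set (ι → X))
    [DecidablePred fun S : Finset ι ↦ S.piecewise (fun _ ↦ x) (fun _ ↦ y) ∈ T] :
    (Measure.pi (fun _ : ι ↦ ENNReal.ofReal p • Measure.dirac x +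
        ENNReal.ofReal (1 - p) • Measure.dirac y) T).toReal =
      ∑ S : Finset ι with S.piecewise (fun _ ↦ x) (fun _ ↦ y) ∈ T,
        p ^ #S * (1 - p) ^ (Fintype.card ι - #S) := by
  have : IsFiniteMeasure (ENNReal.ofReal p • Measure.dirac x +
    ENNReal.ofReal (1 - p) • Measure.dirac y) := ⟨by simp⟩
  have weight_nonneg (S : Finset ι) : 0 ≤ p ^ #S * (1 - p) ^ (Fintype.card ι - #S) :=
    mul_nonneg (pow_nonneg hp0 _) (pow_nonneg (sub_nonneg.2 hp1) _)
  have weight_eq (S : Finset ι) :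
      (∏ _i ∈ S, ENNReal.ofReal p) * ∏ _i ∈ Sᶜ, ENNReal.ofReal (1 - p) =
        ENNReal.ofReal (p ^ #S * (1 - p) ^ (Fintype.card ι - #S)) := by
    rw [prod_const, prod_const, card_compl, ENNReal.ofReal_mul (pow_nonneg hp0 _),
      ENNReal.ofReal_pow hp0, ENNReal.ofReal_pow (sub_nonneg.2 hp1)]
  simp_rw [pi_smul_dirac_add_smul_dirac, Measure.finsetSum_apply, Measure.smul_apply,
    Measure.dirac_apply, weight_eq, Set.indicator_apply, Pi.one_apply, smul_ite, smul_zero,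
    smul_eq_mul, mul_one]
  rw [← sum_filter, ← ENNReal.ofReal_sum_of_nonneg fun S _ ↦ weight_nonneg S,
    ENNReal.toReal_ofReal (sum_nonneg fun S _ ↦ weight_nonneg S)]

end TwoPointLaws

section DisjointAllocs

variable {ι V : Type*} [DecidableEq ι]

lemma pairwiseDisjoint_insert_iff_update [DecidableEq V] {S : Finset ι} {j : ι} (hj : j ∉ S)
    (C : ι → Finset V) (B : Finset V) :
    ((insert j S : Finset ι) : Set ι).PairwiseDisjoint C ↔
      (S : Set ι).PairwiseDisjoint (Function.update C j B) ∧
        Disjoint (C j) (S.biUnion (Function.update C j B)) := by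
  have hC : ∀ i ∈ S, Function.update C j B i = C i := fun i hi ↦
    Function.update_of_ne (ne_of_mem_of_not_mem hi hj) B C
  rw [coe_insert, Set.pairwiseDisjoint_insert_of_notMem (mod_cast hj), disjoint_biUnion_right]
  refine and_congr ?_ (forall₂_congr fun i hi ↦ by rw [hC i hi])
  exact forall₂_congr fun i hi ↦ forall₂_congr fun l hl ↦ by
    rw [Function.onFun, Function.onFun, hC i hi, hC l hl]

variable [Fintype ι] [Fintype V]

variable (V) in
open Classical in
/-- The `d`-choice allocations, storing each object of `ι` on a set of `d` nodes of `V`, for which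
no two objects in `S` share a node. -/
noncomputable def disjointAllocs (d : ℕ) (S : Finset ι) : Finset (ι → Finset V) :=
  {C ∈ Fintype.piFinset fun _ ↦ powersetCard d univ | (S : Set ι).PairwiseDisjoint C}

lemma mem_disjointAllocs {d : ℕ} {S : Finset ι} {C : ι → Finset V} :
    C ∈ disjointAllocs V d S ↔ (∀ i, #(C i) = d) ∧ (S : Set ι).PairwiseDisjoint C := by
  simp [disjointAllocs]

-- Double counting: exchanging `C j` with `B` turns a pair of an allocation `C` disjoint on
-- `insert j S` and an arbitrary `d`-set `B` into a pair of an allocation disjoint on `S` and a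
-- `d`-set avoiding all its sets over `S`.
lemma card_disjointAllocs_insert {d : ℕ} {S : Finset ι} {j : ι} (hj : j ∉ S) :
    #(disjointAllocs V d (insert j S)) * (Fintype.card V).choose d =
      #(disjointAllocs V d S) * (Fintype.card V - #S * d).choose d := by
  classical
  let avoiding (C : ι → Finset V) : Finset (Finset V) := powersetCard d (S.biUnion C)ᶜ
  have card_avoiding : ∀ C ∈ disjointAllocs V d S,
      #(avoiding C) = (Fintype.card V - #S * d).choose d := fun C hC ↦ by
    obtain ⟨card_C, disj_C⟩ := mem_disjointAllocs.1 hC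
    rw [card_powersetCard, card_compl, card_biUnion disj_C, sum_const_nat fun i _ ↦ card_C i]
  let exchange : (ι → Finset V) × Finset V ≃ (_ : ι → Finset V) × Finset V :=
    { toFun := fun q ↦ ⟨Function.update q.1 j q.2, q.1 j⟩
      invFun := fun q ↦ (Function.update q.1 j q.2, q.1 j)
      left_inv := fun q ↦ by simp
      right_inv := fun q ↦ by simp }
  calc #(disjointAllocs V d (insert j S)) * (Fintype.card V).choose d
    _ = #(disjointAllocs V d (insert j S) ×ˢ powersetCard d (univ : Finset V)) := by
      rw [card_product, card_powersetCard, card_univ]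
    _ = #((disjointAllocs V d S).sigma avoiding) := by
      refine card_equiv exchange fun ⟨C, B⟩ ↦ ?_
      have card_iff : (∀ i, #(C i) = d) ∧ #B = d ↔
          (∀ i, #(Function.update C j B i) = d) ∧ #(C j) = d := by
        rw [Function.forall_update_iff C fun _ A ↦ #A = d]
        grind
      simp only [exchange, avoiding, Equiv.coe_fn_mk, mem_product, mem_sigma, mem_powersetCard,
        mem_disjointAllocs, pairwiseDisjoint_insert_iff_update hj C B, subset_univ,
        subset_compl_iff_disjoint_right, true_and]
      tauto
    _ = #(disjointAllocs V d S) * (Fintype.card V - #S * d).choose d := by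
      rw [card_sigma, sum_const_nat card_avoiding]

lemma card_disjointAllocs_div_choose_pow {d : ℕ} (hd : d ≤ Fintype.card V) (S : Finset ι) :
    (#(disjointAllocs V d S) : ℝ) / ((Fintype.card V).choose d : ℝ) ^ Fintype.card ι =
      ∏ i ∈ range #S,
        ((Fintype.card V - i * d).choose d : ℝ) / ((Fintype.card V).choose d : ℝ) := by
  have choose_ne_zero : ((Fintype.card V).choose d : ℝ) ≠ 0 :=
    mod_cast (Nat.choose_pos hd).ne'
  induction S using Finset.induction_on with
  | empty => simp [disjointAllocs, choose_ne_zero]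
  | insert j S hj ih =>
    have card_insert : (#(disjointAllocs V d (insert j S)) : ℝ) * (Fintype.card V).choose d =
        #(disjointAllocs V d S) * (Fintype.card V - #S * d).choose d :=
      mod_cast card_disjointAllocs_insert hj
    rw [card_insert_of_notMem hj, prod_range_succ, ← ih,
      eq_div_of_mul_eq choose_ne_zero card_insert]
    ring

end DisjointAllocs

lemma prod_range_choose_div_choose {n d : ℕ} (hdn : d ≤ n) (a : ℕ) :
    ∏ i ∈ range a, ((n - i * d).choose d : ℝ) / (n.choose d : ℝ) =
      if a * d ≤ n then ∏ i ∈ Icc 1 (a - 1), ((n - i * d).choose d : ℝ) / (n.choose d : ℝ)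
      else 0 := by
  have choose_ne_zero : (n.choose d : ℝ) ≠ 0 := mod_cast (Nat.choose_pos hdn).ne'
  split_ifs with had
  · rcases a.eq_zero_or_pos with rfl | ha
    · simp
    · rw [prod_range_eq_mul_Ico _ ha, Icc_sub_one_right_eq_Ico_of_not_isMin (by simpa using ha.ne')]
      simp [choose_ne_zero]
  · obtain ⟨b, rfl⟩ : ∃ b, a = b + 1 := Nat.exists_eq_succ_of_ne_zero (by rintro rfl; simp at had)
    have last_lt : n - b * d < d := by
      have hd : d ≠ 0 := by rintro rfl; simp at had
      rw [add_one_mul] at had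
      omega
    exact prod_eq_zero (self_mem_range_succ b) (by simp [Nat.choose_eq_zero_of_lt last_lt])

lemma sum_toReal_pi_servable {n d k : ℕ} {m p : ℝ} (hm : 0 < m) (hp0 : 0 ≤ p) (hp1 : p ≤ 1) :
    ∑ C ∈ Fintype.piFinset (fun _ : Fin k ↦ (univ : Finset (Fin n)).powersetCard d),
        ((Measure.pi fun _ : Fin k ↦ ENNReal.ofReal p • Measure.dirac (m * d) +
          ENNReal.ofReal (1 - p) • Measure.dirac 0) {ρ | Servable C m ρ}).toReal =
      ∑ S : Finset (Fin k), #(disjointAllocs (Fin n) d S) * (p ^ #S * (1 - p) ^ (k - #S)) := by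
  classical
  have servable_iff (C : Fin k → Finset (Fin n)) (hC : ∀ i, #(C i) = d) (S : Finset (Fin k)) :
      Servable C m (S.piecewise (fun _ ↦ m * d) fun _ ↦ 0) ↔
        (S : Set (Fin k)).PairwiseDisjoint C := by
    simpa only [hC] using servable_piecewise_iff (C := C) hm S
  simp_rw [toReal_pi_two_point _ _ hp0 hp1, Fintype.card_fin]
  rw [sum_comm' (t' := univ) (s' := disjointAllocs (Fin n) d)]
  · simp only [sum_const, nsmul_eq_mul]
  · intro C S
    simp only [Fintype.mem_piFinset, mem_powersetCard_univ, mem_filter, mem_univ, true_and,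
      and_true, Set.mem_ofPred_eq, mem_disjointAllocs]
    exact and_congr_right fun hC ↦ servable_iff C hC S

theorem stmt7_general {n d k : ℕ} (hdn : d ≤ n) {m p : ℝ} (hm : 0 < m) (hp0 : 0 ≤ p) (hp1 : p ≤ 1)
    (μ : Measure ℝ)
    (hμ : μ = ENNReal.ofReal p • Measure.dirac (m * d) +
            ENNReal.ofReal (1 - p) • Measure.dirac 0) :
    (∑ C ∈ Fintype.piFinset (fun _ : Fin k ↦ (univ : Finset (Fin n)).powersetCard d),
        ((Measure.pi fun _ : Fin k ↦ μ) {ρ | Servable C m ρ}).toReal) /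
        ((n.choose d : ℝ) ^ k) =
      ∑ a ∈ Finset.range (k + 1),
        (k.choose a : ℝ) * p ^ a * (1 - p) ^ (k - a) *
          (if a * d ≤ n then
            ∏ i ∈ Finset.Icc 1 (a - 1), (((n - i * d).choose d : ℝ) / (n.choose d : ℝ))
          else 0) := by
  have disjoint_fraction (S : Finset (Fin k)) :
      (#(disjointAllocs (Fin n) d S) : ℝ) / (n.choose d : ℝ) ^ k =
        ∏ i ∈ range #S, ((n - i * d).choose d : ℝ) / (n.choose d : ℝ) := by
    simpa using card_disjointAllocs_div_choose_pow (V := Fin n) (by simpa using hdn) S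
  subst hμ
  rw [sum_toReal_pi_servable hm hp0 hp1, sum_div]
  simp_rw [mul_div_right_comm, disjoint_fraction]
  rw [← powerset_univ, sum_powerset_apply_card fun a ↦
    (∏ i ∈ range a, ((n - i * d).choose d : ℝ) / (n.choose d : ℝ)) *
      (p ^ a * (1 - p) ^ (k - a)), card_fin]
  refine sum_congr rfl fun a _ ↦ ?_
  rw [prod_range_choose_div_choose hdn, nsmul_eq_mul]
  ring

/-- For i.i.d. demands taking value `m*d` with probability `p` and `0` otherwise and the
random design (each object stored on a uniformly random `d`-subset of the `n` nodes,
independently across objects and of the demands), the robustness — here written as the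
average, over all choices of the `n` service-choice sets among `d`-subsets, of the
probability that the demand vector is `m`-servable — equals
`E_A[1{A·d ≤ n} ∏_{i=1}^{A-1} binom(n - i·d, d)/binom(n, d)]` with `A ~ Binomial(n, p)`. -/
theorem stmt7 (n d : ℕ) (hn : 0 < n) (hd : 1 ≤ d) (hdn : d ≤ n)
    (m p : ℝ) (hm0 : 0 < m) (hm1 : m ≤ 1) (hp0 : 0 ≤ p) (hp1 : p ≤ 1)
    (μ : Measure ℝ)
    (hμ : μ = ENNReal.ofReal p • Measure.dirac (m * d) +
            ENNReal.ofReal (1 - p) • Measure.dirac 0) :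
    (∑ C ∈ Fintype.piFinset (fun _ : Fin n => (univ : Finset (Fin n)).powersetCard d),
        ((Measure.pi fun _ : Fin n => μ) {ρ | Servable C m ρ}).toReal) /
        ((n.choose d : ℝ) ^ n) =
      ∑ a ∈ Finset.range (n + 1),
        (n.choose a : ℝ) * p ^ a * (1 - p) ^ (n - a) *
          (if a * d ≤ n then
            ∏ i ∈ Finset.Icc 1 (a - 1), (((n - i * d).choose d : ℝ) / (n.choose d : ℝ))
          else 0) :=
  stmt7_general hdn hm0 hp0 hp1 μ hμ
end

section
/- In a d-choice allocation with clustering design (d | n), the robustness equals P = F_d(m·d)^{n/d}, where F_d is the CDF of the sum of d i.i.d. demands. -/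
/-!
Summing the load constraints over the nodes of one cluster shows that a servable demand vector puts
at most `m` times the number of its nodes on each cluster; conversely, splitting each nonnegative
demand evenly over the nodes of its cluster meets these bounds. So servability is, almost surely,
one condition per cluster, and these conditions involve disjoint blocks of independent demands.
-/

open MeasureTheory Finset
open scoped ENNReal

/-- Clustering design: `d ∣ n`, nodes and objects are partitioned into `n / d` clusters
of `d` consecutive indices, and each object is stored on every node of its cluster. -/
def ClusteringDesign {n : ℕ} (d : ℕ) (C : Fin n → Finset (Fin n)) : Prop :=
  d ∣ n ∧ ∀ i : Fin n, C i = univ.filter (fun u : Fin n => (u : ℕ) / d = (i : ℕ) / d)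

section FiberProduct

variable {ι κ : Type*} [Fintype ι] [Fintype κ] [DecidableEq κ] (a : ι → κ)
  {X : ι → Type*} [∀ i, MeasurableSpace (X i)] (μ : ∀ i, Measure (X i))
  [∀ i, SigmaFinite (μ i)]

lemma measurePreserving_pi_fiber :
    MeasurePreserving
      (fun (v : ∀ c, ∀ i : {i // a i = c}, X i) i => v (a i) ⟨i, rfl⟩)
      (Measure.pi fun c => Measure.pi fun i : {i // a i = c} => μ i) (Measure.pi μ) := by
  have hmeas : Measurable
      (fun (v : ∀ c, ∀ i : {i // a i = c}, X i) i => v (a i) ⟨i, rfl⟩) := by fun_prop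
  refine ⟨hmeas, (Measure.pi_eq fun s hs => ?_).symm⟩
  have preimage_box : (fun (v : ∀ c, ∀ i : {i // a i = c}, X i) i => v (a i) ⟨i, rfl⟩) ⁻¹'
      Set.univ.pi s = Set.univ.pi fun c => Set.univ.pi fun i : {i // a i = c} => s i := by
    ext v
    simp only [Set.mem_preimage, Set.mem_univ_pi, Subtype.forall]
    exact ⟨fun h c i hi => hi ▸ h i, fun h i => h (a i) i rfl⟩
  rw [Measure.map_apply hmeas (.univ_pi hs), preimage_box]
  simp only [Measure.pi_pi]
  exact Fintype.prod_fiberwise a fun i => μ i (s i)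

lemma pi_forall_fiber_mem {S : ∀ c, Set (∀ i : {i // a i = c}, X i)}
    (hS : ∀ c, MeasurableSet (S c)) :
    Measure.pi μ {x | ∀ c, (fun i : {i // a i = c} => x i) ∈ S c} =
      ∏ c, Measure.pi (fun i : {i // a i = c} => μ i) (S c) := by
  have hmeas : MeasurableSet {x : ∀ i, X i | ∀ c, (fun i : {i // a i = c} => x i) ∈ S c} :=
    measurableSet_setOfPred.2 <| .forall fun c =>
      (measurableSet_setOfPred.1 (hS c)).comp (by fun_prop)
  rw [← (measurePreserving_pi_fiber a μ).measure_preimage hmeas.nullMeasurableSet,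
    ← Measure.pi_pi]
  congr 1
  ext v
  have restrict_eq (c : κ) : (fun i : {i // a i = c} => v (a i) ⟨i, rfl⟩) = v c := by
    ext ⟨i, rfl⟩
    rfl
  simp only [Set.mem_preimage, Set.mem_ofPred_eq, restrict_eq, Set.mem_univ_pi]

end FiberProduct

lemma pi_sum_mem_congr {ι ι' M : Type*} [Fintype ι] [Fintype ι'] [AddCommMonoid M]
    [MeasurableSpace M] (μ : Measure M) [SigmaFinite μ] (e : ι ≃ ι') (s : Set M) :
    Measure.pi (fun _ : ι => μ) {v | ∑ i, v i ∈ s} =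
      Measure.pi (fun _ : ι' => μ) {v | ∑ i, v i ∈ s} := by
  rw [← (measurePreserving_piCongrLeft (fun _ : ι' => μ) e).measure_preimage_equiv]
  congr 1
  ext v
  simp [← e.sum_comp, MeasurableEquiv.coe_piCongrLeft, Equiv.piCongrLeft_apply_apply]

/-- The nodes and objects are grouped into clusters labelled by `κ`, object `i` belonging to the
cluster `a i` and node `u` to the cluster `b u`, and each object is stored on exactly the nodes of
its cluster. Clusters may have any sizes, and may lack nodes or objects. -/
def IsClustered {n k : ℕ} {κ : Type*} (C : Fin k → Finset (Fin n)) (a : Fin k → κ)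
    (b : Fin n → κ) : Prop :=
  ∀ i u, u ∈ C i ↔ b u = a i

namespace IsClustered

variable {n k : ℕ} {κ : Type*} [DecidableEq κ] {C : Fin k → Finset (Fin n)} {a : Fin k → κ}
  {b : Fin n → κ} {m : ℝ} {ρ : Fin k → ℝ}

lemma eq_filter_nodes (hC : IsClustered C a b) (i : Fin k) : C i = univ.filter (b · = a i) := by
  ext u
  simp [hC i u]

lemma filter_mem_eq_filter (hC : IsClustered C a b) (u : Fin n) :
    univ.filter (u ∈ C ·) = univ.filter (a · = b u) := by
  ext i
  simp [hC i u, eq_comm]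

lemma sum_le_of_servable (hC : IsClustered C a b) (h : Servable C m ρ) (c : κ) :
    ∑ i with a i = c, ρ i ≤ m * #{u | b u = c} := by
  obtain ⟨x, -, -, demand, load⟩ := h
  calc ∑ i with a i = c, ρ i
      = ∑ i with a i = c, ∑ u with b u = c, x i u := by
        refine sum_congr rfl fun i hi => ?_
        rw [← demand i, hC.eq_filter_nodes, (mem_filter.1 hi).2]
    _ = ∑ u with b u = c, ∑ i with a i = c, x i u := sum_comm
    _ ≤ ∑ u with b u = c, m := by
        refine sum_le_sum fun u hu => ?_
        simpa only [hC.filter_mem_eq_filter, (mem_filter.1 hu).2] using load u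
    _ = m * #{u | b u = c} := by rw [sum_const, nsmul_eq_mul, mul_comm]

lemma servable_of_sum_le (hC : IsClustered C a b) (hρ : ∀ i, 0 ≤ ρ i)
    (h : ∀ c, ∑ i with a i = c, ρ i ≤ m * #{u | b u = c}) : Servable C m ρ := by
  refine ⟨fun i u => if u ∈ C i then ρ i / #(C i) else 0, fun i u => ?_,
    fun i u hu => if_neg hu, fun i => ?_, fun u => ?_⟩
  · have := hρ i
    positivity
  · rw [sum_congr rfl fun u hu => if_pos hu, sum_const, nsmul_eq_mul]
    refine mul_div_cancel_of_imp' fun hcard => le_antisymm ?_ (hρ i)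
    -- An object stored nowhere belongs to a cluster without nodes, whose total demand is `≤ 0`.
    calc ρ i ≤ ∑ j with a j = a i, ρ j :=
          single_le_sum (fun j _ => hρ j) (by simp)
      _ ≤ m * #{u | b u = a i} := h (a i)
      _ = 0 := by rw [← hC.eq_filter_nodes, hcard, mul_zero]
  · have cluster_pos : (0 : ℝ) < #{v | b v = b u} := by
      exact_mod_cast card_pos.2 ⟨u, by simp⟩
    calc ∑ i with u ∈ C i, (if u ∈ C i then ρ i / #(C i) else 0)
        = ∑ i with a i = b u, ρ i / #{v | b v = b u} := by
          rw [← hC.filter_mem_eq_filter]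
          refine sum_congr rfl fun i hi => ?_
          have hu : u ∈ C i := (mem_filter.1 hi).2
          rw [if_pos hu, hC.eq_filter_nodes, (hC i u).1 hu]
      _ = (∑ i with a i = b u, ρ i) / #{v | b v = b u} := (sum_div ..).symm
      _ ≤ m := (div_le_iff₀ cluster_pos).2 (h (b u))

lemma servable_iff (hC : IsClustered C a b) (hρ : ∀ i, 0 ≤ ρ i) :
    Servable C m ρ ↔ ∀ c, ∑ i with a i = c, ρ i ≤ m * #{u | b u = c} :=
  ⟨hC.sum_le_of_servable, hC.servable_of_sum_le hρ⟩

lemma pi_servable_eq_prod [Fintype κ] (hC : IsClustered C a b) (m : ℝ) (μ : Fin k → Measure ℝ)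
    [∀ i, SigmaFinite (μ i)] (hμ : ∀ i, μ i (Set.Iio 0) = 0) :
    Measure.pi μ {ρ | Servable C m ρ} =
      ∏ c, Measure.pi (fun i : {i // a i = c} => μ i) {v | ∑ i, v i ≤ m * #{u | b u = c}} := by
  have nonneg_ae : ∀ᵐ ρ ∂Measure.pi μ, ∀ i, 0 ≤ ρ i :=
    ae_all_iff.2 fun i => (Measure.tendsto_eval_ae_ae (i := i)).eventually <|
      ae_iff.2 <| by simpa only [not_le, Set.Iio_def] using hμ i
  have servable_ae : {ρ | Servable C m ρ} =ᵐ[Measure.pi μ]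
      {ρ | ∀ c, ∑ i : {i // a i = c}, ρ i ≤ m * #{u | b u = c}} := by
    filter_upwards [nonneg_ae] with ρ hρ
    refine propext <| (hC.servable_iff hρ).trans <| forall_congr' fun c => ?_
    rw [sum_subtype _ mem_filter_univ]
  rw [measure_congr servable_ae]
  exact pi_forall_fiber_mem a μ
    (S := fun c => {v | ∑ i, v i ≤ m * #{u | b u = c}})
    fun _ => measurableSet_le (by fun_prop) measurable_const

end IsClustered

theorem stmt8_general {n k d s : ℕ} {κ : Type*} [Fintype κ] [DecidableEq κ]
    {C : Fin k → Finset (Fin n)} {a : Fin k → κ} {b : Fin n → κ} (hC : IsClustered C a b)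
    (ha : ∀ c, #{i | a i = c} = d) (hb : ∀ c, #{u | b u = c} = s)
    (m : ℝ) (μ : Measure ℝ) [SigmaFinite μ] (hμ : μ (Set.Iio 0) = 0) :
    (Measure.pi fun _ : Fin k => μ) {ρ | Servable C m ρ} =
      ((Measure.pi fun _ : Fin d => μ) {v | ∑ i, v i ≤ m * s}) ^ Fintype.card κ := by
  rw [hC.pi_servable_eq_prod m _ fun _ => hμ, ← card_univ]
  refine prod_eq_pow_card fun c _ => ?_
  have e : {i // a i = c} ≃ Fin d :=
    Fintype.equivFinOfCardEq ((Fintype.card_subtype _).trans (ha c))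
  rw [hb c]
  exact pi_sum_mem_congr μ e (Set.Iic (m * s))

lemma card_filter_divNat_eq {k d : ℕ} (c : Fin k) : #{i : Fin (k * d) | i.divNat = c} = d :=
  calc #{i : Fin (k * d) | i.divNat = c}
      = #({c} ×ˢ (univ : Finset (Fin d))) :=
        card_equiv finProdFinEquiv.symm fun i => by simp [eq_comm]
    _ = d := by simp

lemma ClusteringDesign.exists_isClustered {n d : ℕ} {C : Fin n → Finset (Fin n)} (hd : 0 < d)
    (hC : ClusteringDesign d C) :
    ∃ a : Fin n → Fin (n / d), IsClustered C a a ∧ ∀ c, #{i | a i = c} = d := by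
  obtain ⟨hdvd, hC⟩ := hC
  obtain ⟨k, rfl⟩ := exists_eq_mul_left_of_dvd hdvd
  rw [Nat.mul_div_cancel _ hd]
  refine ⟨Fin.divNat, fun i u => ?_, card_filter_divNat_eq⟩
  simp [hC, Fin.ext_iff]

/-- In a `d`-choice allocation with clustering design (`d ∣ n`), the robustness equals
`F_d(m·d) ^ (n/d)`, where `F_d` is the CDF of the sum of `d` i.i.d. demands. -/
theorem stmt8 (n d : ℕ) (hn : 0 < n) (hd : 0 < d)
    (C : Fin n → Finset (Fin n)) (hC : ClusteringDesign d C)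
    (m : ℝ) (hm0 : 0 < m) (hm1 : m ≤ 1)
    (μ : Measure ℝ) [IsProbabilityMeasure μ] (hμ : μ (Set.Iio 0) = 0) :
    (Measure.pi fun _ : Fin n => μ) {ρ | Servable C m ρ} =
      ((Measure.pi fun _ : Fin d => μ) {v | ∑ i, v i ≤ m * d}) ^ (n / d) := by
  obtain ⟨a, hCa, ha⟩ := hC.exists_isClustered hd
  simpa only [Fintype.card_fin] using stmt8_general hCa ha ha m μ hμ
end

section
/- In any d-choice allocation of n objects on n nodes with i.i.d. demands, the robustness satisfies P ≤ min_{1 ≤ s ≤ n} Pr(S_s^{(c)} ≤ s·m·d), where S_s^{(c)} is the circular s-scan statistic of the demands. -/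
/-!
A node serving an object carries at least the share of that object's demand routed to it, so each
share is at most `m` and no demand exceeds `m` times the number of its service choices. Wherever
the demand vector is servable, every window of `s` demands therefore sums to at most `s * m * d`:
the servability event is contained in every scan event.
-/

open MeasureTheory Finset
open scoped ENNReal

/-- The circular `s`-scan statistic of `ρ_0, …, ρ_{n-1}`: the maximum over all `i` of
`ρ_i + ρ_{i+1} + ⋯ + ρ_{i+s-1}`, indices taken mod `n`. -/
def circScan {n : ℕ} (s : ℕ) (hn : 0 < n) (ρ : Fin n → ℝ) : ℝ :=
  univ.sup' (univ_nonempty_iff.mpr ⟨⟨0, hn⟩⟩)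
    (fun i : Fin n => ∑ j ∈ range s, ρ ⟨((i : ℕ) + j) % n, Nat.mod_lt _ hn⟩)

theorem Servable.le_card_mul {n k : ℕ} {C : Fin k → Finset (Fin n)} {m : ℝ} {ρ : Fin k → ℝ}
    (h : Servable C m ρ) (i : Fin k) : ρ i ≤ (C i).card * m := by
  obtain ⟨x, x_nonneg, -, sum_eq, load_le⟩ := h
  have share_le : ∀ u ∈ C i, x i u ≤ m := fun u hu =>
    calc x i u ≤ ∑ j ∈ univ.filter (fun j => u ∈ C j), x j u :=
          single_le_sum (f := fun j => x j u) (fun j _ => x_nonneg j u)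
            (mem_filter.mpr ⟨mem_univ i, hu⟩)
      _ ≤ m := load_le u
  calc ρ i = ∑ u ∈ C i, x i u := (sum_eq i).symm
    _ ≤ (C i).card • m := sum_le_card_nsmul _ _ _ share_le
    _ = (C i).card * m := nsmul_eq_mul _ _

theorem circScan_le_mul_of_forall_le {n : ℕ} (hn : 0 < n) {ρ : Fin n → ℝ} {b : ℝ}
    (h : ∀ i, ρ i ≤ b) (s : ℕ) : circScan s hn ρ ≤ s * b := by
  refine sup'_le _ _ fun i _ => ?_
  calc ∑ j ∈ range s, ρ ⟨((i : ℕ) + j) % n, Nat.mod_lt _ hn⟩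
      ≤ (range s).card • b := sum_le_card_nsmul _ _ _ fun _ _ => h _
    _ = s * b := by rw [card_range, nsmul_eq_mul]

theorem Servable.circScan_le {n k d : ℕ} {C : Fin k → Finset (Fin n)} {m : ℝ} {ρ : Fin k → ℝ}
    (h : Servable C m ρ) (hk : 0 < k) (hC : ∀ i, (C i).card ≤ d) (hm : 0 ≤ m) (s : ℕ) :
    circScan s hk ρ ≤ s * m * d := by
  have demand_le (i : Fin k) : ρ i ≤ m * d :=
    calc ρ i ≤ (C i).card * m := h.le_card_mul i
      _ ≤ d * m := by gcongr; exact hC i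
      _ = m * d := mul_comm _ _
  simpa only [mul_assoc] using circScan_le_mul_of_forall_le hk demand_le s

theorem stmt11_general {n k d : ℕ} (hk : 0 < k) {C : Fin k → Finset (Fin n)}
    (hC : ∀ i, (C i).card ≤ d) {m : ℝ} (hm : 0 ≤ m) (ν : Measure (Fin k → ℝ)) :
    ν {ρ | Servable C m ρ} ≤ ν {ρ | ∀ s : ℕ, circScan s hk ρ ≤ s * m * d} :=
  measure_mono fun _ hρ => Servable.circScan_le hρ hk hC hm

/-- In any `d`-choice allocation of `n` objects on `n` nodes, for every `1 ≤ s ≤ n`, the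
robustness is at most `Pr(S_s^{(c)} ≤ s·m·d)`, where `S_s^{(c)}` is the circular `s`-scan
statistic of the i.i.d. demands; hence `P ≤ min_{1 ≤ s ≤ n} Pr(S_s^{(c)} ≤ s·m·d)`. -/
theorem stmt11 (n d : ℕ) (hn : 0 < n) (hd : 1 ≤ d)
    (C : Fin n → Finset (Fin n)) (hC : ∀ i, (C i).card = d)
    (m : ℝ) (hm0 : 0 < m) (hm1 : m ≤ 1)
    (μ : Measure ℝ) [IsProbabilityMeasure μ] (hμ : μ (Set.Iio 0) = 0)
    (s : ℕ) (hs : 1 ≤ s) (hsn : s ≤ n) :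
    (Measure.pi fun _ : Fin n => μ) {ρ | Servable C m ρ} ≤
      (Measure.pi fun _ : Fin n => μ)
        {ρ | circScan s hn ρ ≤ (s : ℝ) * m * (d : ℝ)} :=
  (stmt11_general hn (fun i => (hC i).le) hm0.le _).trans (measure_mono fun _ hρ => hρ s)
end

section
/- Let ρ_1,…,ρ_n be i.i.d. nonnegative random variables and 1 ≤ s < n. Then for every x, Pr(S_s > x) ≤ Pr(S_s^{(c)} > x) ≤ (n/(n−s)) · Pr(S_s > x), where S_s is the linear s-scan statistic and S_s^{(c)} the circular s-scan statistic. -/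
/-!
Every rotation of the circle of indices preserves the joint law, so the `n` rotated samples all
have the same probability of a linear exceedance. If the circular window starting at `i` has sum
above `x`, then rotating the sample by `i - t` makes it start at `t`, and it is a linear window
for each of the `n + 1 - s` positions `t ≤ n - s`. On the circular event, therefore, at least
`n + 1 - s` of the `n` rotated samples have a linear exceedance, and taking expectations of this
count gives `(n + 1 - s) * P(circ) ≤ n * P(lin)`, which is slightly sharper than the factor
`n / (n - s)`.
-/

open MeasureTheory Finset
open scoped ENNReal

/-- The linear `s`-scan statistic of `ρ_0, …, ρ_{n-1}`: the maximum over
`0 ≤ i ≤ n - s` of `ρ_i + ⋯ + ρ_{i+s-1}` (no wrap-around; for `s ≤ n` the index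
`(i + j) % n` below equals `i + j`). -/
def linScan {n : ℕ} (s : ℕ) (hn : 0 < n) (ρ : Fin n → ℝ) : ℝ :=
  (range (n - s + 1)).sup' (nonempty_range_iff.mpr (Nat.succ_ne_zero _))
    (fun i => ∑ j ∈ range s, ρ ⟨(i + j) % n, Nat.mod_lt _ hn⟩)

section Counting

variable {Ω ι : Type*} [MeasurableSpace Ω] {P : Measure Ω} {C : Set Ω} {m : ℕ}

lemma natCast_mul_measure_le_sum_measure {I : Finset ι} {p : ι → Ω → Prop}
    [∀ i, DecidablePred (p i)] (hp : ∀ i ∈ I, MeasurableSet {ω | p i ω})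
    (hC : ∀ ω ∈ C, m ≤ #{i ∈ I | p i ω}) :
    m * P C ≤ ∑ i ∈ I, P {ω | p i ω} := by
  let N : Ω → ℝ≥0∞ := fun ω => ∑ i ∈ I, {ω | p i ω}.indicator 1 ω
  have hN_card : ∀ ω, N ω = #{i ∈ I | p i ω} := fun ω => by
    simp [N, Set.indicator_apply]
  have h_meas : ∀ i ∈ I, Measurable ({ω | p i ω}.indicator (1 : Ω → ℝ≥0∞)) := fun i hi =>
    measurable_one.indicator (hp i hi)
  have hC_subset : C ⊆ {ω | (m : ℝ≥0∞) ≤ N ω} := fun ω hω => by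
    simpa only [Set.mem_ofPred_eq, hN_card, Nat.cast_le] using hC ω hω
  calc m * P C ≤ m * P {ω | (m : ℝ≥0∞) ≤ N ω} := by gcongr
    _ ≤ ∫⁻ ω, N ω ∂P := mul_meas_ge_le_lintegral (Finset.measurable_sum _ h_meas) _
    _ = ∑ i ∈ I, ∫⁻ ω, {ω | p i ω}.indicator 1 ω ∂P :=
      lintegral_finsetSum' _ fun i hi => (h_meas i hi).aemeasurable
    _ = ∑ i ∈ I, P {ω | p i ω} := sum_congr rfl fun i hi => lintegral_indicator_one (hp i hi)

lemma natCast_mul_measure_le_card_mul_measure [Fintype ι] {Ω' : Type*} [MeasurableSpace Ω']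
    {Q : Measure Ω'} {T : ι → Ω → Ω'} (hT : ∀ i, MeasurePreserving (T i) P Q)
    {L : Set Ω'} [DecidablePred (· ∈ L)] (hL : MeasurableSet L)
    (hC : ∀ ω ∈ C, m ≤ #{i | T i ω ∈ L}) :
    m * P C ≤ Fintype.card ι * Q L :=
  calc m * P C ≤ ∑ i, P (T i ⁻¹' L) :=
      natCast_mul_measure_le_sum_measure (fun i _ => (hT i).measurable hL) hC
    _ = Fintype.card ι * Q L := by
      simp [fun i => (hT i).measure_preimage hL.nullMeasurableSet]

end Counting

section Reindexing

variable {α : Type*} [MeasurableSpace α]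

lemma measurePreserving_pi_comp_equiv {ι κ : Type*} [Fintype ι] [Fintype κ]
    (ν : κ → Measure α) [∀ k, SigmaFinite (ν k)] (e : ι ≃ κ) :
    MeasurePreserving (fun f : κ → α => f ∘ e) (Measure.pi ν) (Measure.pi fun i => ν (e i)) :=
  (measurePreserving_piCongrLeft ν e).symm

lemma measurePreserving_comp_finCycle {n : ℕ} {P : Measure (Fin n → α)}
    (hP : MeasurePreserving (fun ρ : Fin n → α => ρ ∘ finRotate n) P P) (k : Fin n) :
    MeasurePreserving (fun ρ : Fin n → α => ρ ∘ finCycle k) P P := by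
  have h_iterate (m : ℕ) :
      (fun ρ : Fin n → α => ρ ∘ finRotate n)^[m] = fun ρ => ρ ∘ (finRotate n)^[m] := by
    induction m with
    | zero => rfl
    | succ m ih => rw [Function.iterate_succ', ih, Function.iterate_succ]; rfl
  simpa only [finCycle_eq_finRotate_iterate, h_iterate] using hP.iterate k

end Reindexing

section Scan

variable {n : ℕ}

lemma measurable_linScan (s : ℕ) (hn : 0 < n) :
    Measurable fun ρ : Fin n → ℝ => linScan s hn ρ :=
  measurable_range_sup'' fun _ _ => by fun_prop

lemma linScan_le_circScan (s : ℕ) (hn : 0 < n) (ρ : Fin n → ℝ) :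
    linScan s hn ρ ≤ circScan s hn ρ :=
  sup'_le _ _ fun i _ =>
    le_sup'_of_le _ (mem_univ ⟨i % n, Nat.mod_lt _ hn⟩) (by simp only [Nat.mod_add_mod, le_refl])

variable [NeZero n] {M : Type*} [AddCommMonoid M]

/-- The sum of the `s` cyclically consecutive values of `ρ` starting at `i`: a common form for the
windows of `circScan` and `linScan`, with the index arithmetic done in `Fin n`. -/
def windowSum (s : ℕ) (ρ : Fin n → M) (i : Fin n) : M :=
  ∑ j ∈ range s, ρ (i + Fin.ofNat n j)

lemma windowSum_comp_finCycle (s : ℕ) (ρ : Fin n → M) (k i : Fin n) :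
    windowSum s (ρ ∘ finCycle k) i = windowSum s ρ (i + k) := by
  simp only [windowSum, Function.comp_apply, finCycle_apply, add_right_comm]

lemma windowSum_eq_sum_mod (s : ℕ) (ρ : Fin n → M) (i : Fin n) :
    windowSum s ρ i = ∑ j ∈ range s, ρ ⟨((i : ℕ) + j) % n, Nat.mod_lt _ (NeZero.pos n)⟩ :=
  sum_congr rfl fun j _ => congrArg ρ <| Fin.ext <| by simp [Fin.val_add]

lemma lt_circScan_iff {s : ℕ} {ρ : Fin n → ℝ} {x : ℝ} :
    x < circScan s (NeZero.pos n) ρ ↔ ∃ i, x < windowSum s ρ i := by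
  simp only [circScan, lt_sup'_iff, mem_univ, true_and, windowSum_eq_sum_mod]

lemma windowSum_le_linScan {s : ℕ} (ρ : Fin n → ℝ) {i : Fin n} (hi : i + s ≤ n) :
    windowSum s ρ i ≤ linScan s (NeZero.pos n) ρ :=
  le_sup'_of_le _ (mem_range.2 (by omega)) (windowSum_eq_sum_mod s ρ i).le

lemma le_card_lt_linScan_comp_finCycle {s : ℕ} (hs : 1 ≤ s) {ρ : Fin n → ℝ} {x : ℝ}
    (hx : x < circScan s (NeZero.pos n) ρ) :
    n + 1 - s ≤ #{k : Fin n | x < linScan s (NeZero.pos n) (ρ ∘ finCycle k)} := by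
  obtain ⟨i, hi⟩ := lt_circScan_iff.1 hx
  let start : Fin (n + 1 - s) → Fin n := Fin.castLE (by omega)
  have h_inj : Function.Injective (i - start ·) :=
    sub_right_injective.comp (Fin.castLE_injective _)
  rw [← card_fin (n + 1 - s)]
  refine card_le_card_of_injOn (i - start ·) (fun t _ => ?_) h_inj.injOn
  have h_window : x < windowSum s (ρ ∘ finCycle (i - start t)) (start t) := by
    rwa [windowSum_comp_finCycle, add_sub_cancel]
  have h_start : start t + s ≤ n := by
    simp only [start, Fin.val_castLE]
    omega
  simpa using h_window.trans_le (windowSum_le_linScan _ h_start)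

end Scan

theorem stmt12_general {n s : ℕ} (hn : 0 < n) (hs : 1 ≤ s) (hsn : s ≤ n)
    {P : Measure (Fin n → ℝ)}
    (hP : MeasurePreserving (fun ρ : Fin n → ℝ => ρ ∘ finRotate n) P P) (x : ℝ) :
    P {ρ | x < linScan s hn ρ} ≤ P {ρ | x < circScan s hn ρ} ∧
      P {ρ | x < circScan s hn ρ} ≤
        ((n : ℝ≥0∞) / ((n + 1 - s : ℕ) : ℝ≥0∞)) * P {ρ | x < linScan s hn ρ} := by
  have : NeZero n := .of_pos hn
  refine ⟨measure_mono fun ρ hρ => hρ.trans_le (linScan_le_circScan s hn ρ), ?_⟩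
  have h_count : ((n + 1 - s : ℕ) : ℝ≥0∞) * P {ρ | x < circScan s hn ρ} ≤
      n * P {ρ | x < linScan s hn ρ} := by
    have h := natCast_mul_measure_le_card_mul_measure (C := {ρ | x < circScan s hn ρ})
      (measurePreserving_comp_finCycle hP)
      (measurableSet_lt measurable_const (measurable_linScan s hn))
      (fun ρ hρ => le_card_lt_linScan_comp_finCycle hs hρ)
    rwa [Fintype.card_fin] at h
  have h_ne_zero : ((n + 1 - s : ℕ) : ℝ≥0∞) ≠ 0 := by
    exact_mod_cast (by omega : n + 1 - s ≠ 0)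
  rw [← ENNReal.mul_div_right_comm,
    ENNReal.le_div_iff_mul_le (.inl h_ne_zero) (.inl (ENNReal.natCast_ne_top _)), mul_comm]
  exact h_count

/-- For `n` i.i.d. nonnegative demands and `1 ≤ s < n`, for every `x`:
`Pr(S_s > x) ≤ Pr(S_s^{(c)} > x) ≤ (n/(n-s)) Pr(S_s > x)`, where `S_s` is the linear
and `S_s^{(c)}` the circular `s`-scan statistic. -/
theorem stmt12 (n s : ℕ) (hn : 0 < n) (hs : 1 ≤ s) (hsn : s < n)
    (μ : Measure ℝ) [IsProbabilityMeasure μ] (hμ : μ (Set.Iio 0) = 0) (x : ℝ) :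
    (Measure.pi fun _ : Fin n => μ) {ρ | x < linScan s hn ρ} ≤
        (Measure.pi fun _ : Fin n => μ) {ρ | x < circScan s hn ρ} ∧
      (Measure.pi fun _ : Fin n => μ) {ρ | x < circScan s hn ρ} ≤
        ((n : ℝ≥0∞) / ((n - s : ℕ) : ℝ≥0∞)) *
          (Measure.pi fun _ : Fin n => μ) {ρ | x < linScan s hn ρ} := by
  refine (stmt12_general hn hs hsn.le (measurePreserving_pi_comp_equiv _ (finRotate n)) x).imp_right
    fun h => h.trans ?_
  gcongr
  omega
end
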